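/- Let a budget profile be given (integer m ≥ 1, strictly increasing positive real privacy budgets ε_1 < ε_2 < ⋯ < ε_m, positive integer counts n_1, …, n_m, n = n_1 + ⋯ + n_m, Z = (n − n_m)(n − n_m + 1/4)), and let d ≥ 1 and s̃ ≥ 1 be integers. Then errO_{1/d}(1/2) + (1/s̃) · Σ_{k=1}^{s̃} errO_1(2^{−(k+1)}) ≤ min( 8/(d² ε_1²) , Z + 8/(d² ε_m²) ) + min( 32(4^{s̃} − 1)/(3 s̃ ε_1²) , Z + 32(4^{s̃} − 1)/(3 s̃ ε_m²) ). (Arithmetic form of Theorem 2: the average per-time-slot error of Personalized Budget Distribution, which is the sum of the dissimilarity-calculation error and the average noisy-publication error, is at most min(8/(d²ε_L²), Z + 8/(d²ε_R²)) + min(32(4^{s̃}−1)/(3s̃ε_L²), Z + 32(4^{s̃}−1)/(3s̃ε_R²)) with ε_L = ε_1 and ε_R = ε_m, provided at most s̃ publications occur per window.) -/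

import Mathlib

open Finset

/-- Sampling probability p_k(θ) = (e^{ε_k} − 1)/(e^{θ} − 1). -/
noncomputable def samplingP {m : ℕ} (ε : Fin m → ℝ) (k : Fin m) (θ : ℝ) : ℝ :=
  (Real.exp (ε k) - 1) / (Real.exp θ - 1)

/-- Sampling error err_s(θ). -/
noncomputable def errS {m : ℕ} (ε : Fin m → ℝ) (nn : Fin m → ℕ) (θ : ℝ) : ℝ :=
  (∑ k, if ε k < θ then (nn k : ℝ) * samplingP ε k θ * (1 - samplingP ε k θ) else 0)
    + (∑ k, if ε k < θ then (nn k : ℝ) * (1 - samplingP ε k θ) else 0) ^ 2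

/-- Noise error err_dp(θ) = 2I²/θ². -/
noncomputable def errDP (I θ : ℝ) : ℝ := 2 * I ^ 2 / θ ^ 2

/-- Total error err(θ) = err_s(θ) + err_dp(θ). -/
noncomputable def errTot {m : ℕ} (ε : Fin m → ℝ) (nn : Fin m → ℕ) (I θ : ℝ) : ℝ :=
  errS ε nn θ + errDP I θ

/-- OBS error: errO_I = min_{1 ≤ j ≤ m} err(ε_j). -/
noncomputable def errO {m : ℕ} (hm : 0 < m) (ε : Fin m → ℝ) (nn : Fin m → ℕ) (I : ℝ) : ℝ :=
  Finset.univ.inf' (Finset.univ_nonempty_iff.mpr (Fin.pos_iff_nonempty.mp hm))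
    (fun j => errTot ε nn I (ε j))

/-- Index of the smallest budget ε_1. -/
def firstIdx {m : ℕ} (hm : 0 < m) : Fin m := ⟨0, hm⟩

/-- Index of the largest budget ε_m. -/
def lastIdx {m : ℕ} (hm : 0 < m) : Fin m := ⟨m - 1, Nat.sub_lt hm Nat.one_pos⟩

/-- Z = (n − n_m)(n − n_m + 1/4). -/
noncomputable def Zval {m : ℕ} (hm : 0 < m) (nn : Fin m → ℕ) : ℝ :=
  ((∑ j, (nn j : ℝ)) - nn (lastIdx hm)) * ((∑ j, (nn j : ℝ)) - nn (lastIdx hm) + 1 / 4)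

/-- N-th square harmonic number H²_N = Σ_{k=1}^N 1/k². -/
noncomputable def sqHarmonic (N : ℕ) : ℝ := ∑ k ∈ Finset.Icc 1 N, 1 / (k : ℝ) ^ 2

/-!
The OBS error is a minimum over thresholds, so it is bounded by the error at the two extreme ones.
At `ε_1` nobody is subsampled and only noise remains. At `ε_m` at most `n - n_m` users are
subsampled; since `p (1 - p) ≤ 1/4` and `1 - p ≤ 1`, the variance and squared bias add up to at
most `Z`. Scaling the budgets by `β` multiplies the noise by `β⁻²` and preserves `Z`, so averaging
over the scales `2^{-(k+1)}` leaves a geometric sum of ratio 4.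
-/

/-- The number of users whose budget is below the threshold `θ`: exactly those are subsampled,
so they are the only ones contributing to the sampling error `errS`. -/
noncomputable def usersBelow {m : ℕ} (ε : Fin m → ℝ) (nn : Fin m → ℕ) (θ : ℝ) : ℕ :=
  ∑ k with ε k < θ, nn k

section SamplingError

variable {m : ℕ} {ε : Fin m → ℝ} {θ : ℝ}

theorem samplingP_mem_Icc {k : Fin m} (hk : 0 ≤ ε k) (hkθ : ε k ≤ θ) :
    samplingP ε k θ ∈ Set.Icc (0 : ℝ) 1 := by
  have hnum : 0 ≤ Real.exp (ε k) - 1 := sub_nonneg.mpr (Real.one_le_exp hk)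
  have hle : Real.exp (ε k) - 1 ≤ Real.exp θ - 1 := by gcongr
  exact ⟨div_nonneg hnum (hnum.trans hle), div_le_one_of_le₀ hle (hnum.trans hle)⟩

theorem errS_eq_zero_of_forall_le (nn : Fin m → ℕ) (hθ : ∀ k, θ ≤ ε k) : errS ε nn θ = 0 := by
  simp [errS, (hθ _).not_gt]

theorem errS_le_usersBelow (nn : Fin m → ℕ) (hε : ∀ k, 0 ≤ ε k) :
    errS ε nn θ ≤ usersBelow ε nn θ * (usersBelow ε nn θ + 1 / 4) := by
  have hp : ∀ k ∈ univ.filter (ε · < θ), samplingP ε k θ ∈ Set.Icc (0 : ℝ) 1 := fun k hk =>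
    samplingP_mem_Icc (hε k) (mem_filter.mp hk).2.le
  have hvar : ∑ k with ε k < θ, (nn k : ℝ) * samplingP ε k θ * (1 - samplingP ε k θ) ≤
      usersBelow ε nn θ * (1 / 4) := by
    rw [usersBelow, Nat.cast_sum, sum_mul]
    refine sum_le_sum fun k _ => ?_
    rw [mul_assoc]
    gcongr
    linarith [four_mul_le_sq_add (samplingP ε k θ) (1 - samplingP ε k θ)]
  have hbias : ∑ k with ε k < θ, (nn k : ℝ) * (1 - samplingP ε k θ) ≤ usersBelow ε nn θ := by
    rw [usersBelow, Nat.cast_sum]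
    exact sum_le_sum fun k hk =>
      mul_le_of_le_one_right (Nat.cast_nonneg _) (sub_le_self _ (hp k hk).1)
  have hbias_nonneg : 0 ≤ ∑ k with ε k < θ, (nn k : ℝ) * (1 - samplingP ε k θ) :=
    sum_nonneg fun k hk => mul_nonneg (Nat.cast_nonneg _) (sub_nonneg.mpr (hp k hk).2)
  calc
    errS ε nn θ ≤ usersBelow ε nn θ * (1 / 4) + (usersBelow ε nn θ : ℝ) ^ 2 := by
      rw [errS, ← sum_filter, ← sum_filter]
      gcongr
    _ = usersBelow ε nn θ * (usersBelow ε nn θ + 1 / 4) := by ring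

theorem usersBelow_add_le_sum (ε : Fin m → ℝ) (nn : Fin m → ℕ) (j : Fin m) :
    usersBelow ε nn (ε j) + nn j ≤ ∑ k, nn k := by
  rw [← sum_erase_add univ nn (mem_univ j), usersBelow]
  gcongr
  intro k hk
  exact mem_erase.mpr ⟨fun hkj => (mem_filter.mp hk).2.ne (congrArg ε hkj), mem_univ k⟩

theorem errS_lastIdx_le_Zval (hm : 0 < m) (nn : Fin m → ℕ) (hε : ∀ k, 0 ≤ ε k) :
    errS ε nn (ε (lastIdx hm)) ≤ Zval hm nn := by
  have hcount : (usersBelow ε nn (ε (lastIdx hm)) : ℝ) ≤ ∑ k, (nn k : ℝ) - nn (lastIdx hm) :=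
    le_sub_iff_add_le.mpr (mod_cast usersBelow_add_le_sum ε nn (lastIdx hm))
  have hcount_nonneg := (Nat.cast_nonneg _).trans hcount
  refine (errS_le_usersBelow nn hε).trans ?_
  rw [Zval]
  gcongr

end SamplingError

theorem errDP_mul (I β θ : ℝ) : errDP I (β * θ) = (β ^ 2)⁻¹ * errDP I θ := by
  rw [errDP, errDP, mul_pow, div_mul_eq_div_div_swap, div_eq_inv_mul]

section OBSError

variable {m : ℕ} (hm : 0 < m) {ε : Fin m → ℝ} (nn : Fin m → ℕ) (I : ℝ)

theorem errO_le_errTot (ε : Fin m → ℝ) (j : Fin m) : errO hm ε nn I ≤ errTot ε nn I (ε j) :=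
  inf'_le (fun j => errTot ε nn I (ε j)) (mem_univ j)

theorem errO_le_min (hpos : ∀ j, 0 < ε j) (hmono : Monotone ε) :
    errO hm ε nn I ≤
      min (errDP I (ε (firstIdx hm))) (Zval hm nn + errDP I (ε (lastIdx hm))) := by
  refine le_min ?_ ?_
  · have hfirst : ∀ k, ε (firstIdx hm) ≤ ε k := fun k => hmono (Nat.zero_le k)
    simpa only [errTot, errS_eq_zero_of_forall_le nn hfirst, zero_add]
      using errO_le_errTot hm nn I ε (firstIdx hm)
  · refine (errO_le_errTot hm nn I ε (lastIdx hm)).trans ?_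
    rw [errTot]
    gcongr
    exact errS_lastIdx_le_Zval hm nn fun j => (hpos j).le

theorem errO_scaled_le_min (hpos : ∀ j, 0 < ε j) (hmono : Monotone ε) {β : ℝ} (hβ : 0 < β) :
    errO hm (fun j => β * ε j) nn I ≤
      min ((β ^ 2)⁻¹ * errDP I (ε (firstIdx hm)))
        (Zval hm nn + (β ^ 2)⁻¹ * errDP I (ε (lastIdx hm))) := by
  simpa only [errDP_mul] using
    errO_le_min hm nn I (fun j => mul_pos hβ (hpos j)) (hmono.const_mul hβ.le)

open scoped BigOperators in
theorem expect_errO_scaled_le_min (hpos : ∀ j, 0 < ε j) (hmono : Monotone ε) {ι : Type*}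
    {t : Finset ι} (ht : t.Nonempty) {β : ι → ℝ} (hβ : ∀ i ∈ t, 0 < β i) :
    𝔼 i ∈ t, errO hm (fun j => β i * ε j) nn I ≤
      min ((𝔼 i ∈ t, (β i ^ 2)⁻¹) * errDP I (ε (firstIdx hm)))
        (Zval hm nn + (𝔼 i ∈ t, (β i ^ 2)⁻¹) * errDP I (ε (lastIdx hm))) := by
  have hscaled := fun i hi => le_min_iff.mp (errO_scaled_le_min hm nn I hpos hmono (hβ i hi))
  rw [expect_mul, expect_mul, ← expect_const ht (Zval hm nn), ← expect_add_distrib]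
  exact le_min (expect_le_expect fun i hi => (hscaled i hi).1)
    (expect_le_expect fun i hi => (hscaled i hi).2)

end OBSError

open scoped BigOperators in
theorem expect_inv_sq_half_pow (s : ℕ) :
    𝔼 k ∈ Icc 1 s, (((1 / 2 : ℝ) ^ (k + 1)) ^ 2)⁻¹ = 16 * (4 ^ s - 1) / (3 * s) := by
  have hterm (k : ℕ) : (((1 / 2 : ℝ) ^ (k + 1)) ^ 2)⁻¹ = 4 * 4 ^ k := by
    rw [pow_right_comm, ← inv_pow, pow_succ']
    norm_num
  have hgeom : ∑ k ∈ Icc 1 s, (4 : ℝ) ^ k = (4 ^ (s + 1) - 4 ^ 1) / (4 - 1) := by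
    rw [← Ico_add_one_right_eq_Icc, geom_sum_Ico (by norm_num) (by omega)]
  simp only [hterm]
  rw [expect_eq_sum_div_card, ← mul_sum, hgeom, Nat.card_Icc, Nat.add_sub_cancel]
  ring

/-- Arithmetic form of Theorem 2: the average per-time-slot error of Personalized
Budget Distribution (dissimilarity-calculation error plus average noisy-publication
error) is bounded as stated. -/
theorem pbd_average_error_bound (m : ℕ) (hm : 0 < m) (ε : Fin m → ℝ) (nn : Fin m → ℕ)
    (hpos : ∀ j, 0 < ε j) (hmono : StrictMono ε) (hcount : ∀ j, 0 < nn j)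
    (d : ℕ) (hd : 1 ≤ d) (s : ℕ) (hs : 1 ≤ s) :
    errO hm (fun j => (1 / 2 : ℝ) * ε j) nn (1 / (d : ℝ))
      + (1 / (s : ℝ)) *
          ∑ k ∈ Finset.Icc 1 s, errO hm (fun j => (1 / 2 : ℝ) ^ (k + 1) * ε j) nn 1 ≤
      min (8 / ((d : ℝ) ^ 2 * (ε (firstIdx hm)) ^ 2))
          (Zval hm nn + 8 / ((d : ℝ) ^ 2 * (ε (lastIdx hm)) ^ 2))
        + min (32 * ((4 : ℝ) ^ s - 1) / (3 * (s : ℝ) * (ε (firstIdx hm)) ^ 2))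
            (Zval hm nn + 32 * ((4 : ℝ) ^ s - 1) / (3 * (s : ℝ) * (ε (lastIdx hm)) ^ 2)) := by
  have hdissimilarity := errO_scaled_le_min hm nn (1 / (d : ℝ)) hpos hmono.monotone one_half_pos
  have hpublication := expect_errO_scaled_le_min hm nn 1 hpos hmono.monotone (nonempty_Icc.mpr hs)
    fun k _ => pow_pos (one_half_pos (α := ℝ)) (k + 1)
  rw [expect_inv_sq_half_pow, expect_eq_sum_div_card, Nat.card_Icc, Nat.add_sub_cancel,
    div_eq_inv_mul, ← one_div] at hpublication
  have hdissimilarity_noise (x : ℝ) :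
      ((1 / 2 : ℝ) ^ 2)⁻¹ * errDP (1 / d) x = 8 / ((d : ℝ) ^ 2 * x ^ 2) := by
    rw [errDP]; ring
  have hpublication_noise (x : ℝ) :
      16 * ((4 : ℝ) ^ s - 1) / (3 * s) * errDP 1 x = 32 * (4 ^ s - 1) / (3 * s * x ^ 2) := by
    rw [errDP]; ring
  simpa only [hdissimilarity_noise, hpublication_noise] using add_le_add hdissimilarity hpublication
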